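/- Fix a trading network market. (First welfare theorem) If (p, Φ) is a competitive equilibrium, then Φ is an efficient set of trades. (Second welfare theorem) If, in addition, every agent's valuation is fully substitutable, then for every efficient set of trades Φ ⊆ Ω there exist prices p ∈ ℝ^Ω such that (p, Φ) is a competitive equilibrium. -/

import Mathlib

/-!
The first welfare theorem is summation: at an equilibrium every agent weakly prefers its own
bundle, and payments cancel when the utilities are added up.

For the second one it suffices to find prices `p` with `∑ i, V i p ≤ w(I)`, where `V i` is the
indirect utility of agent `i`: the utilities of an efficient `Φ` at `p` add up to `w(I)`, so each
of them must then attain `V i p`.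

Full substitutability makes `V i` a submodular function of the prices
(`indirect_submodular`).  Give every trade two prices, `p ω` for its buyer and `q ω` for its
seller.  The sum `F (p, q)` of the indirect utilities is submodular and is a maximum of affine
functions of `(p, q)`, one for each profile of bundles.  The trades are now cleared one at a time.
If `F` is submodular, then for each trade `ω` there is a common price `r = p ω = q ω` at which `F`
is attained by a profile whose buyer and seller agree on `ω` (`exists_clearing_price`): when buying
without selling and selling without buying were both strictly profitable at the midpoint price,
moving the two prices apart would violate submodularity.  Hence restricting the maximum to the
profiles that agree on `ω` is the same as minimising over the common price of `ω`, and partial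
minimisation keeps submodularity (`clearing_induction`).  After all trades are cleared only
profiles coming from sets of trades are left, and their maximum is `w(I)`.
-/

open Finset

variable {I Ω : Type*} [Fintype I] [DecidableEq I] [Fintype Ω] [DecidableEq Ω]

/-- The trades involving agent `i`. -/
def tradesOf (b s : Ω → I) (i : I) : Finset Ω :=
  Finset.univ.filter fun ω => b ω = i ∨ s ω = i

/-- `χ^i_ω`: `1` if `i` buys `ω`, `-1` if `i` sells `ω`, `0` otherwise. -/
def chi (b s : Ω → I) (i : I) (ω : Ω) : ℝ :=
  if b ω = i then 1 else if s ω = i then -1 else 0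

/-- Quasi-linear utility of agent `i` for bundle `Ψ` at prices `p`. -/
noncomputable def utility (b s : Ω → I) (v : I → Finset Ω → EReal) (i : I)
    (Ψ : Finset Ω) (p : Ω → ℝ) : EReal :=
  v i Ψ - ((∑ ω ∈ Ψ, chi b s i ω * p ω : ℝ) : EReal)

/-- Demand of agent `i` at prices `p`: utility-maximizing bundles `Ψ ⊆ Ω_i`. -/
noncomputable def demand (b s : Ω → I) (v : I → Finset Ω → EReal) (i : I)
    (p : Ω → ℝ) : Set (Finset Ω) :=
  {Ψ | Ψ ⊆ tradesOf b s i ∧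
    ∀ Ψ' ⊆ tradesOf b s i, utility b s v i Ψ' p ≤ utility b s v i Ψ p}

/-- A market arrangement `(p, Φ)` is a competitive equilibrium. -/
noncomputable def IsCompetitiveEquilibrium (b s : Ω → I) (v : I → Finset Ω → EReal)
    (p : Ω → ℝ) (Φ : Finset Ω) : Prop :=
  ∀ i : I, Φ ∩ tradesOf b s i ∈ demand b s v i p

/-- Full substitutability of agent `i`'s valuation. -/
noncomputable def FullySubstitutable (b s : Ω → I) (v : I → Finset Ω → EReal) (i : I) : Prop :=
  (∀ p p' : Ω → ℝ, (∀ ω, s ω = i → p ω = p' ω) → (∀ ω, b ω = i → p' ω ≤ p ω) →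
    ∀ Ψ ∈ demand b s v i p, ∃ Ψ' ∈ demand b s v i p',
      (∀ ω ∈ Ψ', b ω = i → p ω = p' ω → ω ∈ Ψ) ∧ (∀ ω ∈ Ψ, s ω = i → ω ∈ Ψ')) ∧
  (∀ p p' : Ω → ℝ, (∀ ω, b ω = i → p ω = p' ω) → (∀ ω, s ω = i → p ω ≤ p' ω) →
    ∀ Ψ ∈ demand b s v i p, ∃ Ψ' ∈ demand b s v i p',
      (∀ ω ∈ Ψ', s ω = i → p ω = p' ω → ω ∈ Ψ) ∧ (∀ ω ∈ Ψ, b ω = i → ω ∈ Ψ'))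

/-- The set of trades that are active under offer profile `σ`. -/
noncomputable def activeTrades (b s : Ω → I) (σ : I → Ω → ℝ) : Finset Ω :=
  Finset.univ.filter fun ω => σ (b ω) ω = σ (s ω) ω

/-- Payoff of agent `i` in the trading network game under offers `σ`. -/
noncomputable def payoff (b s : Ω → I) (v : I → Finset Ω → EReal)
    (σ : I → Ω → ℝ) (i : I) : EReal :=
  utility b s v i (activeTrades b s σ ∩ tradesOf b s i) (fun ω => σ (b ω) ω)

/-- Nash equilibrium of the trading network game. -/
noncomputable def IsNashEquilibrium (b s : Ω → I) (v : I → Finset Ω → EReal)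
    (σ : I → Ω → ℝ) : Prop :=
  ∀ (i : I) (τ : Ω → ℝ), payoff b s v (Function.update σ i τ) i ≤ payoff b s v σ i

/-- `ε`-tightness of an offer profile. -/
def IsTight (b s : Ω → I) (σ : I → Ω → ℝ) (ε : ℝ) : Prop :=
  ∀ ω : Ω, |σ (b ω) ω - σ (s ω) ω| ≤ ε

/-- The maximum vertex degree `Δ` of the market. -/
def maxDegree (b s : Ω → I) : ℕ :=
  Finset.univ.sup fun i => (tradesOf b s i).card

/-- Trades whose buyer and seller both lie in coalition `C`. -/
def coalitionTrades (b s : Ω → I) (C : Finset I) : Finset Ω :=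
  Finset.univ.filter fun ω => b ω ∈ C ∧ s ω ∈ C

/-- The characteristic function `w(C)` of the cooperative market game. -/
noncomputable def coalitionValue (b s : Ω → I) (v : I → Finset Ω → EReal)
    (C : Finset I) : EReal :=
  (coalitionTrades b s C).powerset.sup' (Finset.powerset_nonempty _)
    fun Φ => ∑ i ∈ C, v i (Φ ∩ tradesOf b s i)

/-- A set of trades is efficient if it attains the market value. -/
noncomputable def IsEfficient (b s : Ω → I) (v : I → Finset Ω → EReal)
    (Φ : Finset Ω) : Prop :=
  (∑ i, v i (Φ ∩ tradesOf b s i)) = coalitionValue b s v Finset.univ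

/-- A core imputation of the cooperative market game. -/
noncomputable def IsCoreImputation (b s : Ω → I) (v : I → Finset Ω → EReal)
    (x : I → ℝ) : Prop :=
  (∀ i, 0 ≤ x i) ∧ (((∑ i, x i : ℝ) : EReal) = coalitionValue b s v Finset.univ) ∧
  ∀ C : Finset I, coalitionValue b s v C ≤ ((∑ i ∈ C, x i : ℝ) : EReal)

/-- Agent `i` is essential if it is involved in every efficient set of trades. -/
noncomputable def IsEssential (b s : Ω → I) (v : I → Finset Ω → EReal) (i : I) : Prop :=
  ∀ Φ : Finset Ω, IsEfficient b s v Φ → (Φ ∩ tradesOf b s i).Nonempty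

/-- Agents involved in at least one trade of `Ψ`. -/
noncomputable def involvedAgents (b s : Ω → I) (Ψ : Finset Ω) : Finset I :=
  Finset.univ.filter fun i => (Ψ ∩ tradesOf b s i).Nonempty

/-- `(q, Ψ)` blocks the market outcome `(p, Φ)`. -/
noncomputable def Blocks (b s : Ω → I) (v : I → Finset Ω → EReal) (p : Ω → ℝ)
    (Φ : Finset Ω) (q : Ω → ℝ) (Ψ : Finset Ω) : Prop :=
  (∀ i ∈ involvedAgents b s Ψ,
    utility b s v i (Φ ∩ tradesOf b s i) p ≤ utility b s v i (Ψ ∩ tradesOf b s i) q) ∧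
  (∃ i ∈ involvedAgents b s Ψ,
    utility b s v i (Φ ∩ tradesOf b s i) p < utility b s v i (Ψ ∩ tradesOf b s i) q)

/-- A market outcome is in the core if no coalition can block it. -/
noncomputable def IsCoreOutcome (b s : Ω → I) (v : I → Finset Ω → EReal)
    (p : Ω → ℝ) (Φ : Finset Ω) : Prop :=
  ¬ ∃ (q : Ω → ℝ) (Ψ : Finset Ω), Blocks b s v p Φ q Ψ

-- The finiteness and decidability assumptions on agents and trades are kept in all lemmas.
set_option linter.unusedSectionVars false

/-! ### Finite maxima of real functions -/

/-- The maximum of `g` over the finite set `D`, with value `0` if `D` is empty. -/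
noncomputable def maxOver {ζ : Type*} (D : Finset ζ) (g : ζ → ℝ) : ℝ :=
  if h : D.Nonempty then D.sup' h g else 0

lemma le_maxOver {ζ : Type*} {D : Finset ζ} (g : ζ → ℝ) {z : ζ} (hz : z ∈ D) :
    g z ≤ maxOver D g := by
  unfold maxOver
  rw [dif_pos ⟨z, hz⟩]
  exact Finset.le_sup' g hz

lemma exists_eq_maxOver {ζ : Type*} {D : Finset ζ} (g : ζ → ℝ) (hD : D.Nonempty) :
    ∃ z ∈ D, maxOver D g = g z := by
  unfold maxOver
  rw [dif_pos hD]
  exact Finset.exists_mem_eq_sup' hD g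

lemma maxOver_le {ζ : Type*} {D : Finset ζ} {g : ζ → ℝ} (hD : D.Nonempty) {a : ℝ}
    (h : ∀ z ∈ D, g z ≤ a) : maxOver D g ≤ a := by
  obtain ⟨z, hz, e⟩ := exists_eq_maxOver g hD
  rw [e]
  exact h z hz

lemma exists_between_finset {ζ : Type*} (S T : Finset ζ) (l u : ζ → ℝ)
    (h : ∀ x ∈ S, ∀ y ∈ T, l x ≤ u y) : ∃ r, (∀ x ∈ S, l x ≤ r) ∧ (∀ y ∈ T, r ≤ u y) := by
  rcases S.eq_empty_or_nonempty with rfl | hS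
  · refine ⟨-maxOver T (fun y => -u y), by simp, fun y hy => ?_⟩
    linarith [le_maxOver (fun y => -u y) hy]
  · refine ⟨maxOver S l, fun x hx => le_maxOver l hx, fun y hy => ?_⟩
    exact maxOver_le hS fun x hx => h x hx y hy

/-! ### Submodularity -/

/-- Submodularity of `f` at all pairs of points of `R`. -/
def SubmodularOn {L : Type*} [Lattice L] (R : L → Prop) (f : L → ℝ) : Prop :=
  ∀ x y, R x → R y → f (x ⊓ y) + f (x ⊔ y) ≤ f x + f y

lemma sum_update_eq (S : Finset Ω) (w : Ω → ℝ) (p : Ω → ℝ) (ω : Ω) (r : ℝ) :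
    ∑ a ∈ S, w a * Function.update p ω r a
      = ∑ a ∈ S, w a * p a + if ω ∈ S then w ω * (r - p ω) else 0 := by
  have h : ∀ a, w a * Function.update p ω r a
      = w a * p a + if a = ω then w ω * (r - p ω) else 0 := by
    intro a
    by_cases h : a = ω
    · subst h; simp; ring
    · simp [h]
  simp_rw [h, Finset.sum_add_distrib]
  simp

/-- Submodularity may be tested by raising a single coordinate: the increment of `f` must
decrease when the other coordinates go up. -/
lemma submodular_of_step (f : (Ω → ℝ) → ℝ)
    (h : ∀ (ω : Ω) (p p' : Ω → ℝ) (t : ℝ), p ≤ p' → p ω = p' ω → 0 ≤ t →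
      f (Function.update p' ω (p' ω + t)) + f p ≤ f (Function.update p ω (p ω + t)) + f p') :
    SubmodularOn (fun _ => True) f := by
  intro x y _ _
  -- The coordinates in `S` have already been raised, from `x ⊓ y` to `x` and from `y` to `x ⊔ y`.
  have key : ∀ S : Finset Ω,
      f (fun a => if a ∈ S then (x ⊔ y) a else y a) + f (x ⊓ y)
        ≤ f (fun a => if a ∈ S then x a else (x ⊓ y) a) + f y := by
    intro S
    induction S using Finset.induction_on with
    | empty =>
      simp only [Finset.notMem_empty, if_false]
      exact (add_comm _ _).le
    | insert ω S hω ih =>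
      rcases le_total (x ω) (y ω) with hle | hle
      · have e1 : (fun a => if a ∈ insert ω S then (x ⊔ y) a else y a)
            = fun a => if a ∈ S then (x ⊔ y) a else y a := by
          funext a
          by_cases ha : a = ω
          · subst ha; simp [hω, hle]
          · simp [ha]
        have e2 : (fun a => if a ∈ insert ω S then x a else (x ⊓ y) a)
            = fun a => if a ∈ S then x a else (x ⊓ y) a := by
          funext a
          by_cases ha : a = ω
          · subst ha; simp [hω, hle]
          · simp [ha]
        rw [e1, e2]
        exact ih
      · have hs := h ω (fun a => if a ∈ S then x a else (x ⊓ y) a)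
          (fun a => if a ∈ S then (x ⊔ y) a else y a) (x ω - y ω)
          (by intro a; by_cases ha : a ∈ S <;> simp [ha])
          (by simp [hω, hle]) (by linarith)
        have e1 : (fun a => if a ∈ insert ω S then (x ⊔ y) a else y a)
            = Function.update (fun a => if a ∈ S then (x ⊔ y) a else y a) ω
              ((fun a => if a ∈ S then (x ⊔ y) a else y a) ω + (x ω - y ω)) := by
          funext a
          by_cases ha : a = ω
          · subst ha; simp [hω, hle]
          · simp [ha]
        have e2 : (fun a => if a ∈ insert ω S then x a else (x ⊓ y) a)
            = Function.update (fun a => if a ∈ S then x a else (x ⊓ y) a) ω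
              ((fun a => if a ∈ S then x a else (x ⊓ y) a) ω + (x ω - y ω)) := by
          funext a
          by_cases ha : a = ω
          · subst ha; simp [hω, hle]
          · simp [ha]
        rw [e1, e2]
        linarith
  have := key Finset.univ
  simp only [Finset.mem_univ, if_true] at this
  linarith

/-- Two maximisation problems over `D`, with objectives `u` and `u'`, in which the alternatives
satisfying `P` are charged an extra `τ`.  If for no charge all solutions of the first problem
satisfy `P` while all solutions of the second violate it, then a charge `t ≥ 0` lowers the second
maximum at least as much as the first. -/
lemma maxOver_charge {ζ : Type*} (D : Finset ζ) (hD : D.Nonempty) (u u' : ζ → ℝ)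
    (P : ζ → Prop) [DecidablePred P] (t : ℝ) (ht : 0 ≤ t)
    (h : ∀ τ : ℝ, ¬ ((∀ z ∈ D, (∀ y ∈ D, u y - (if P y then τ else 0)
            ≤ u z - (if P z then τ else 0)) → P z) ∧
          (∀ z ∈ D, (∀ y ∈ D, u' y - (if P y then τ else 0)
            ≤ u' z - (if P z then τ else 0)) → ¬ P z))) :
    maxOver D (fun z => u' z - if P z then t else 0) + maxOver D u
      ≤ maxOver D (fun z => u z - if P z then t else 0) + maxOver D u' := by
  by_contra hc
  push Not at hc
  obtain ⟨z, hz, ez⟩ := exists_eq_maxOver u hD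
  obtain ⟨z', hz', ez'⟩ := exists_eq_maxOver (fun z => u' z - if P z then t else 0) hD
  have h1 := le_maxOver (fun z => u z - if P z then t else 0) hz
  have h2 := le_maxOver u' hz'
  by_cases hPz : P z
  · by_cases hPz' : P z'
    · simp only [hPz, hPz', if_true] at h1 ez'
      linarith
    · simp only [hPz, hPz', if_true, if_false] at h1 ez'
      set W := maxOver D (fun z => u z - if P z then t else 0) with hW
      set V' := maxOver D u' with hmaxV
      -- A charge strictly between the two premiums for `P` contradicts `h`.
      refine h (((u z - W) + (V' - u' z')) / 2) ⟨fun y hy hmax => ?_, fun y hy hmax hPy => ?_⟩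
      · by_contra hPy
        have h3 := hmax z hz
        have h4 := le_maxOver (fun z => u z - if P z then t else 0) hy
        simp only [hPy, hPz, if_true, if_false] at h3 h4
        linarith
      · have h3 := hmax z' hz'
        have h4 := le_maxOver u' hy
        simp only [hPy, hPz', if_true, if_false] at h3
        linarith
  · simp only [hPz, if_false] at h1
    by_cases hPz' : P z' <;> simp only [hPz', if_true, if_false] at ez' <;> linarith

/-! ### Clearing the trades one at a time -/

section Clearing

variable {ζ : Type*}

/-- Value of the alternative `z` at buyer prices `x.1` and seller prices `x.2`, when `z` buys the
trades in `A z` and sells those in `B z`. -/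
def netValue (c : ζ → ℝ) (A B : ζ → Finset Ω) (z : ζ) (x : (Ω → ℝ) × (Ω → ℝ)) : ℝ :=
  c z - ∑ ω ∈ A z, x.1 ω + ∑ ω ∈ B z, x.2 ω

/-- The alternatives that buy and sell the same trades of `T`. -/
def clearedOn (𝒜 : Finset ζ) (A B : ζ → Finset Ω) (T : Finset Ω) : Finset ζ :=
  𝒜.filter fun z => ∀ ω ∈ T, ω ∈ A z ↔ ω ∈ B z

/-- The maximal value of an alternative that is cleared on `T`. -/
noncomputable def clearedMax (𝒜 : Finset ζ) (c : ζ → ℝ) (A B : ζ → Finset Ω) (T : Finset Ω)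
    (x : (Ω → ℝ) × (Ω → ℝ)) : ℝ :=
  maxOver (clearedOn 𝒜 A B T) fun z => netValue c A B z x

/-- Buyer and seller prices coincide on `T`. -/
def EqPricesOn (T : Finset Ω) (x : (Ω → ℝ) × (Ω → ℝ)) : Prop := ∀ ω ∈ T, x.1 ω = x.2 ω

/-- The price pair `x` with the buyer price of `ω` set to `r` and its seller price to `r'`. -/
def setPrice (x : (Ω → ℝ) × (Ω → ℝ)) (ω : Ω) (r r' : ℝ) : (Ω → ℝ) × (Ω → ℝ) :=
  (Function.update x.1 ω r, Function.update x.2 ω r')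

lemma setPrice_inf (x y : (Ω → ℝ) × (Ω → ℝ)) (ω : Ω) (r r' t t' : ℝ) :
    setPrice x ω r r' ⊓ setPrice y ω t t' = setPrice (x ⊓ y) ω (r ⊓ t) (r' ⊓ t') := by
  ext a <;> by_cases h : a = ω <;> simp [setPrice, h]

lemma setPrice_sup (x y : (Ω → ℝ) × (Ω → ℝ)) (ω : Ω) (r r' t t' : ℝ) :
    setPrice x ω r r' ⊔ setPrice y ω t t' = setPrice (x ⊔ y) ω (r ⊔ t) (r' ⊔ t') := by
  ext a <;> by_cases h : a = ω <;> simp [setPrice, h]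

lemma netValue_setPrice (c : ζ → ℝ) (A B : ζ → Finset Ω) (z : ζ) (x : (Ω → ℝ) × (Ω → ℝ))
    (ω : Ω) (r r' : ℝ) :
    netValue c A B z (setPrice x ω r r') = netValue c A B z x
      - (if ω ∈ A z then r - x.1 ω else 0) + (if ω ∈ B z then r' - x.2 ω else 0) := by
  have h1 := sum_update_eq (A z) (fun _ => 1) x.1 ω r
  have h2 := sum_update_eq (B z) (fun _ => 1) x.2 ω r'
  simp only [one_mul] at h1 h2
  simp only [netValue, setPrice, h1, h2]
  ring

variable {𝒜 : Finset ζ} {c : ζ → ℝ} {A B : ζ → Finset Ω} {z₀ : ζ}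

lemma mem_clearedOn_insert {T : Finset Ω} {ω : Ω} {z : ζ} :
    z ∈ clearedOn 𝒜 A B (insert ω T) ↔ z ∈ clearedOn 𝒜 A B T ∧ (ω ∈ A z ↔ ω ∈ B z) := by
  simp only [clearedOn, Finset.mem_filter, Finset.forall_mem_insert]
  tauto

lemma clearedOn_nonempty (hz₀ : z₀ ∈ 𝒜) (h₀ : A z₀ = B z₀) (T : Finset Ω) :
    (clearedOn 𝒜 A B T).Nonempty :=
  ⟨z₀, by simp [clearedOn, hz₀, h₀]⟩

lemma clearedMax_insert_le (hz₀ : z₀ ∈ 𝒜) (h₀ : A z₀ = B z₀) (T : Finset Ω) (ω : Ω)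
    (x : (Ω → ℝ) × (Ω → ℝ)) :
    clearedMax 𝒜 c A B (insert ω T) x ≤ clearedMax 𝒜 c A B T x :=
  maxOver_le (clearedOn_nonempty hz₀ h₀ _) fun _ hz =>
    le_maxOver (fun z => netValue c A B z x) (mem_clearedOn_insert.1 hz).1

/-- The common price of a cleared trade does not matter. -/
lemma clearedMax_insert_setPrice (hz₀ : z₀ ∈ 𝒜) (h₀ : A z₀ = B z₀) (T : Finset Ω) (ω : Ω)
    (x : (Ω → ℝ) × (Ω → ℝ)) (hx : x.1 ω = x.2 ω) (r : ℝ) :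
    clearedMax 𝒜 c A B (insert ω T) (setPrice x ω r r)
      = clearedMax 𝒜 c A B (insert ω T) x := by
  have h : ∀ z ∈ clearedOn 𝒜 A B (insert ω T),
      netValue c A B z (setPrice x ω r r) = netValue c A B z x := by
    intro z hz
    rw [netValue_setPrice]
    have := (mem_clearedOn_insert.1 hz).2
    by_cases hA : ω ∈ A z
    · simp [hA, this.1 hA, hx]
    · have hB : ω ∉ B z := fun hB => hA (this.2 hB)
      simp [hA, hB]
  have hne := clearedOn_nonempty hz₀ h₀ (insert ω T)
  apply le_antisymm
  · exact maxOver_le hne fun z hz => (h z hz).le.trans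
      (le_maxOver (fun z => netValue c A B z x) hz)
  · exact maxOver_le hne fun z hz => (h z hz).ge.trans
      (le_maxOver (fun z => netValue c A B z (setPrice x ω r r)) hz)

lemma EqPricesOn.setPrice {T : Finset Ω} {x : (Ω → ℝ) × (Ω → ℝ)} (hx : EqPricesOn T x) {ω : Ω}
    (hω : ω ∉ T) (r r' : ℝ) : EqPricesOn T (setPrice x ω r r') := by
  intro a ha
  have : a ≠ ω := fun h => hω (h ▸ ha)
  simp [_root_.setPrice, this, hx a ha]

/-- Under submodularity, some common price of `ω` makes it optimal for buyer and seller to agree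
on `ω`. -/
lemma exists_clearing_price (hz₀ : z₀ ∈ 𝒜) (h₀ : A z₀ = B z₀) {T : Finset Ω} {ω : Ω}
    (hω : ω ∉ T) (hsub : SubmodularOn (EqPricesOn T) (clearedMax 𝒜 c A B T))
    (x : (Ω → ℝ) × (Ω → ℝ)) (hx : EqPricesOn (insert ω T) x) :
    ∃ r, clearedMax 𝒜 c A B T (setPrice x ω r r) ≤ clearedMax 𝒜 c A B (insert ω T) x := by
  classical
  have hxω : x.1 ω = x.2 ω := hx ω (by simp)
  have hxT : EqPricesOn T x := fun a ha => hx a (by simp [ha])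
  have hne := clearedOn_nonempty (A := A) (B := B) hz₀ h₀ T
  set M := clearedMax 𝒜 c A B (insert ω T) x with hM
  set α : ζ → ℝ := fun z => netValue c A B z x with hα
  have hcl : ∀ z ∈ clearedOn 𝒜 A B T, (ω ∈ A z ↔ ω ∈ B z) → α z ≤ M := fun z hz hzω =>
    le_maxOver (fun z => netValue c A B z x) (mem_clearedOn_insert.2 ⟨hz, hzω⟩)
  -- `Sb` buys `ω` without selling it, `Ss` sells `ω` without buying it.
  set Sb := (clearedOn 𝒜 A B T).filter fun z => ω ∈ A z ∧ ω ∉ B z with hSb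
  set Ss := (clearedOn 𝒜 A B T).filter fun z => ω ∉ A z ∧ ω ∈ B z with hSs
  have key : ∀ z ∈ Sb, ∀ z' ∈ Ss, α z - M ≤ M - α z' := by
    intro y hy y' hy'
    obtain ⟨z, hz, ez⟩ := exists_eq_maxOver α ⟨y, hy⟩
    obtain ⟨z', hz', ez'⟩ := exists_eq_maxOver α ⟨y', hy'⟩
    have hyz := le_maxOver α hy
    have hyz' := le_maxOver α hy'
    rw [ez] at hyz
    rw [ez'] at hyz'
    by_contra hcon
    -- At the midpoint common price, `z` and `z'` have the same value `H > M`.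
    set H := (α z + α z') / 2 with hH
    set r := (α z - α z') / 2 with hr
    set e := x.1 ω with he
    have hHM : M < H := by rw [hH]; linarith
    have hzA := (Finset.mem_filter.1 hz)
    have hzB := (Finset.mem_filter.1 hz')
    have hb : ∀ w ∈ clearedOn 𝒜 A B T, ω ∈ A w → ω ∉ B w → α w ≤ α z := fun w hw h1 h2 =>
      ez ▸ le_maxOver α (Finset.mem_filter.2 ⟨hw, h1, h2⟩)
    have hs : ∀ w ∈ clearedOn 𝒜 A B T, ω ∉ A w → ω ∈ B w → α w ≤ α z' := fun w hw h1 h2 =>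
      ez' ▸ le_maxOver α (Finset.mem_filter.2 ⟨hw, h1, h2⟩)
    have hsm := hsub (setPrice x ω (e + r + (H - M)) (e + r - (H - M)))
      (setPrice x ω (e + r) (e + r)) (hxT.setPrice hω _ _) (hxT.setPrice hω _ _)
    rw [setPrice_inf, setPrice_sup, inf_idem, sup_idem, inf_eq_right.2 (by linarith),
      inf_eq_left.2 (by linarith), sup_eq_left.2 (by linarith), sup_eq_right.2 (by linarith)]
      at hsm
    have b1 : H ≤ clearedMax 𝒜 c A B T (setPrice x ω (e + r) (e + r - (H - M))) := by
      refine le_trans ?_ (le_maxOver (fun z => netValue c A B z _) hzA.1)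
      simp only [netValue_setPrice, hzA.2.1, hzA.2.2, if_true, if_false]
      change H ≤ α z - (e + r - e) + 0
      rw [hH, hr]; linarith
    have b2 : H ≤ clearedMax 𝒜 c A B T (setPrice x ω (e + r + (H - M)) (e + r)) := by
      refine le_trans ?_ (le_maxOver (fun z => netValue c A B z _) hzB.1)
      simp only [netValue_setPrice, hzB.2.1, hzB.2.2, if_true, if_false, ← hxω]
      change H ≤ α z' - 0 + (e + r - e)
      rw [hH, hr]; linarith
    have b3 : clearedMax 𝒜 c A B T (setPrice x ω (e + r) (e + r)) ≤ H := by
      refine maxOver_le hne fun w hw => ?_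
      rw [netValue_setPrice, ← hxω]
      change α w - (if ω ∈ A w then e + r - e else 0) + (if ω ∈ B w then e + r - e else 0) ≤ H
      by_cases hA : ω ∈ A w <;> by_cases hB : ω ∈ B w <;> simp only [hA, hB, if_true, if_false]
      · linarith [hcl w hw (by simp [hA, hB])]
      · linarith [hb w hw hA hB]
      · linarith [hs w hw hA hB]
      · linarith [hcl w hw (by simp [hA, hB])]
    have b4 : clearedMax 𝒜 c A B T (setPrice x ω (e + r + (H - M)) (e + r - (H - M))) ≤ M := by
      refine maxOver_le hne fun w hw => ?_
      rw [netValue_setPrice, ← hxω]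
      change α w - (if ω ∈ A w then e + r + (H - M) - e else 0)
        + (if ω ∈ B w then e + r - (H - M) - e else 0) ≤ M
      by_cases hA : ω ∈ A w <;> by_cases hB : ω ∈ B w <;> simp only [hA, hB, if_true, if_false]
      · linarith [hcl w hw (by simp [hA, hB])]
      · linarith [hb w hw hA hB]
      · linarith [hs w hw hA hB]
      · linarith [hcl w hw (by simp [hA, hB])]
    linarith
  obtain ⟨r, hr1, hr2⟩ := exists_between_finset Sb Ss _ _ key
  refine ⟨x.1 ω + r, maxOver_le hne fun w hw => ?_⟩
  rw [netValue_setPrice, ← hxω]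
  change α w - _ + _ ≤ M
  by_cases hA : ω ∈ A w <;> by_cases hB : ω ∈ B w <;> simp only [hA, hB, if_true, if_false]
  · linarith [hcl w hw (by simp [hA, hB])]
  · linarith [hr1 w (Finset.mem_filter.2 ⟨hw, hA, hB⟩)]
  · linarith [hr2 w (Finset.mem_filter.2 ⟨hw, hA, hB⟩)]
  · linarith [hcl w hw (by simp [hA, hB])]

/-- Clearing the trades of `T` keeps submodularity, and the cleared maximum bounds the unrestricted
maximum at some prices that are common for the trades of `T` and wherever they were before. -/
lemma clearing_induction (hz₀ : z₀ ∈ 𝒜) (h₀ : A z₀ = B z₀)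
    (hsub : SubmodularOn (fun _ => True) (clearedMax 𝒜 c A B ∅)) (T : Finset Ω) :
    SubmodularOn (EqPricesOn T) (clearedMax 𝒜 c A B T) ∧
    ∀ x, EqPricesOn T x → ∃ y, (∀ ω, x.1 ω = x.2 ω → y.1 ω = y.2 ω) ∧
      clearedMax 𝒜 c A B ∅ y ≤ clearedMax 𝒜 c A B T x := by
  induction T using Finset.induction_on with
  | empty =>
    exact ⟨fun x y _ _ => hsub x y trivial trivial, fun x _ => ⟨x, fun _ h => h, le_rfl⟩⟩
  | insert ω T hω ih =>
    have hins : ∀ x : (Ω → ℝ) × (Ω → ℝ), EqPricesOn (insert ω T) x → EqPricesOn T x :=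
      fun x hx a ha => hx a (by simp [ha])
    refine ⟨fun x y hx hy => ?_, fun x hx => ?_⟩
    · obtain ⟨r, hr⟩ := exists_clearing_price hz₀ h₀ hω ih.1 x hx
      obtain ⟨t, ht⟩ := exists_clearing_price hz₀ h₀ hω ih.1 y hy
      have h := ih.1 _ _ ((hins x hx).setPrice hω r r) ((hins y hy).setPrice hω t t)
      rw [setPrice_inf, setPrice_sup] at h
      have hxω := hx ω (by simp)
      have hyω := hy ω (by simp)
      have e1 := clearedMax_insert_setPrice (c := c) hz₀ h₀ T ω (x ⊓ y)
        (by simp [hxω, hyω]) (r ⊓ t)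
      have e2 := clearedMax_insert_setPrice (c := c) hz₀ h₀ T ω (x ⊔ y)
        (by simp [hxω, hyω]) (r ⊔ t)
      have l1 := clearedMax_insert_le (c := c) hz₀ h₀ T ω (setPrice (x ⊓ y) ω (r ⊓ t) (r ⊓ t))
      have l2 := clearedMax_insert_le (c := c) hz₀ h₀ T ω (setPrice (x ⊔ y) ω (r ⊔ t) (r ⊔ t))
      linarith
    · obtain ⟨r, hr⟩ := exists_clearing_price hz₀ h₀ hω ih.1 x hx
      obtain ⟨y, hy, hle⟩ := ih.2 _ ((hins x hx).setPrice hω r r)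
      refine ⟨y, fun a ha => hy a ?_, hle.trans hr⟩
      by_cases h : a = ω
      · subst h; simp [setPrice]
      · simp [setPrice, h, ha]

end Clearing

/-! ### Indirect utility -/

section Market

variable (b s : Ω → I) (v : I → Finset Ω → EReal)

open Classical in
/-- The bundles of agent `i` with a valuation different from `-∞`. -/
noncomputable def feasible (i : I) : Finset (Finset Ω) :=
  (tradesOf b s i).powerset.filter fun Ψ => v i Ψ ≠ ⊥

/-- Real-valued utility; it is the true utility for feasible bundles. -/
noncomputable def realUtility (i : I) (p : Ω → ℝ) (Ψ : Finset Ω) : ℝ :=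
  (v i Ψ).toReal - ∑ ω ∈ Ψ, chi b s i ω * p ω

/-- Indirect utility of agent `i`. -/
noncomputable def indirect (i : I) (p : Ω → ℝ) : ℝ :=
  maxOver (feasible b s v i) (realUtility b s v i p)

variable {b s v}

lemma mem_feasible {i : I} {Ψ : Finset Ω} :
    Ψ ∈ feasible b s v i ↔ Ψ ⊆ tradesOf b s i ∧ v i Ψ ≠ ⊥ := by
  simp [feasible]

lemma empty_mem_feasible (hv0 : ∀ i, v i ∅ = 0) (i : I) : ∅ ∈ feasible b s v i := by
  simp [mem_feasible, hv0]

lemma utility_eq_coe (hvtop : ∀ i Ψ, v i Ψ ≠ ⊤) {i : I} {Ψ : Finset Ω} (h : v i Ψ ≠ ⊥)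
    (p : Ω → ℝ) : utility b s v i Ψ p = (realUtility b s v i p Ψ : EReal) := by
  unfold utility realUtility
  rw [EReal.coe_sub, EReal.coe_toReal (hvtop i Ψ) h]

/-- Demanded bundles are feasible because the empty bundle is. -/
lemma mem_demand_iff (hv0 : ∀ i, v i ∅ = 0) (hvtop : ∀ i Ψ, v i Ψ ≠ ⊤) {i : I} {p : Ω → ℝ}
    {Ψ : Finset Ω} :
    Ψ ∈ demand b s v i p ↔ Ψ ∈ feasible b s v i ∧
      ∀ Ψ' ∈ feasible b s v i, realUtility b s v i p Ψ' ≤ realUtility b s v i p Ψ := by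
  constructor
  · rintro ⟨hsub, hmax⟩
    have hbot : v i Ψ ≠ ⊥ := by
      intro hb
      have h := hmax ∅ (by simp)
      simp [utility, hb, hv0] at h
    refine ⟨mem_feasible.2 ⟨hsub, hbot⟩, fun Ψ' hΨ' => ?_⟩
    have h' := mem_feasible.1 hΨ'
    have h := hmax Ψ' h'.1
    rw [utility_eq_coe hvtop hbot, utility_eq_coe hvtop h'.2] at h
    exact_mod_cast h
  · rintro ⟨hf, hmax⟩
    have hf' := mem_feasible.1 hf
    refine ⟨hf'.1, fun Ψ' hΨ' => ?_⟩
    by_cases hb : v i Ψ' = ⊥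
    · simp [utility, hb]
    · rw [utility_eq_coe hvtop hf'.2, utility_eq_coe hvtop hb]
      exact_mod_cast hmax Ψ' (mem_feasible.2 ⟨hΨ', hb⟩)

lemma exists_mem_demand (hv0 : ∀ i, v i ∅ = 0) (hvtop : ∀ i Ψ, v i Ψ ≠ ⊤) (i : I)
    (p : Ω → ℝ) : ∃ Ψ, Ψ ∈ demand b s v i p := by
  obtain ⟨Ψ, h, e⟩ := exists_eq_maxOver (realUtility b s v i p) ⟨∅, empty_mem_feasible hv0 i⟩
  exact ⟨Ψ, (mem_demand_iff hv0 hvtop).2 ⟨h, fun Ψ' h' => e ▸ le_maxOver _ h'⟩⟩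

lemma realUtility_update (i : I) (p : Ω → ℝ) (ω : Ω) (t : ℝ) (Ψ : Finset Ω) :
    realUtility b s v i (Function.update p ω (p ω + t)) Ψ
      = realUtility b s v i p Ψ - if ω ∈ Ψ then chi b s i ω * t else 0 := by
  unfold realUtility
  rw [sum_update_eq]
  simp only [add_sub_cancel_left]
  ring

/-- Agent `i` holds `ω` if it buys `ω` or does not sell it, i.e. if `ω ∈ Ψ ↔ b ω = i`.  If at no
price of `ω` every bundle demanded at `p` holds `ω` while none demanded at `p'` does, then a price
increase of `ω` raises the indirect utility at `p'` by at most as much as at `p`. -/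
lemma indirect_step_aux (hv0 : ∀ i, v i ∅ = 0) (hvtop : ∀ i Ψ, v i Ψ ≠ ⊤) {i : I} {ω : Ω}
    (hinv : b ω = i ∨ s ω = i) {p p' : Ω → ℝ} {t : ℝ} (ht : 0 ≤ t)
    (h : ∀ τ : ℝ, ¬ ((∀ Ψ ∈ demand b s v i (Function.update p ω (p ω + τ)),
          (ω ∈ Ψ ↔ b ω = i)) ∧
        (∀ Ψ ∈ demand b s v i (Function.update p' ω (p' ω + τ)), ¬ (ω ∈ Ψ ↔ b ω = i)))) :
    indirect b s v i (Function.update p' ω (p' ω + t)) + indirect b s v i p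
      ≤ indirect b s v i (Function.update p ω (p ω + t)) + indirect b s v i p' := by
  have hD : (feasible b s v i).Nonempty := ⟨∅, empty_mem_feasible hv0 i⟩
  -- For a seller, a price increase `τ` is a gift of `τ` together with a charge `τ` for not selling.
  set κ : ℝ := if b ω = i then 0 else 1 with hκ
  have hu : ∀ (q : Ω → ℝ) (τ : ℝ) (Ψ : Finset Ω),
      realUtility b s v i (Function.update q ω (q ω + τ)) Ψ
        = (realUtility b s v i q Ψ - if (ω ∈ Ψ ↔ b ω = i) then τ else 0) + κ * τ := by
    intro q τ Ψ
    rw [realUtility_update, hκ]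
    by_cases hb : b ω = i
    · simp [hb, chi]
    · have hs : s ω = i := hinv.resolve_left hb
      by_cases hΨ : ω ∈ Ψ <;> simp [hb, hs, hΨ, chi]
  have hmax : ∀ q : Ω → ℝ, indirect b s v i (Function.update q ω (q ω + t))
      = maxOver (feasible b s v i) (fun Ψ => realUtility b s v i q Ψ
          - if (ω ∈ Ψ ↔ b ω = i) then t else 0) + κ * t := by
    intro q
    apply le_antisymm
    · refine maxOver_le hD fun Ψ hΨ => ?_
      rw [hu]
      have := le_maxOver (fun Ψ => realUtility b s v i q Ψ
          - if (ω ∈ Ψ ↔ b ω = i) then t else 0) hΨ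
      linarith
    · rw [← le_sub_iff_add_le]
      refine maxOver_le hD fun Ψ hΨ => ?_
      have := le_maxOver (realUtility b s v i (Function.update q ω (q ω + t))) hΨ
      rw [hu] at this
      unfold indirect
      linarith
  have hdem : ∀ (q : Ω → ℝ) (τ : ℝ), ∀ Ψ ∈ demand b s v i (Function.update q ω (q ω + τ)),
      Ψ ∈ feasible b s v i ∧ ∀ y ∈ feasible b s v i,
        realUtility b s v i q y - (if (ω ∈ y ↔ b ω = i) then τ else 0)
          ≤ realUtility b s v i q Ψ - (if (ω ∈ Ψ ↔ b ω = i) then τ else 0) := by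
    intro q τ Ψ hΨ
    rw [mem_demand_iff hv0 hvtop] at hΨ
    refine ⟨hΨ.1, fun y hy => ?_⟩
    have := hΨ.2 y hy
    rw [hu, hu] at this
    linarith
  have main := maxOver_charge (feasible b s v i) hD (realUtility b s v i p)
    (realUtility b s v i p') (fun Ψ => (ω ∈ Ψ ↔ b ω = i)) t ht (by
      rintro τ ⟨h1, h2⟩
      refine h τ ⟨fun Ψ hΨ => ?_, fun Ψ hΨ => ?_⟩
      · exact h1 Ψ (hdem p τ Ψ hΨ).1 (hdem p τ Ψ hΨ).2
      · exact h2 Ψ (hdem p' τ Ψ hΨ).1 (hdem p' τ Ψ hΨ).2)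
  rw [hmax, hmax]
  unfold indirect
  linarith

/-- Under full substitutability the indirect utility is submodular in the prices. -/
lemma indirect_submodular (hbs : ∀ ω, b ω ≠ s ω) (hv0 : ∀ i, v i ∅ = 0)
    (hvtop : ∀ i Ψ, v i Ψ ≠ ⊤) {i : I} (hfs : FullySubstitutable b s v i) :
    SubmodularOn (fun _ => True) (indirect b s v i) := by
  apply submodular_of_step
  intro ω p p' t hle heq ht
  by_cases hinv : b ω = i ∨ s ω = i
  · -- Buyer prices are raised first, by the first half of full substitutability, and then
    -- seller prices, by the second half.
    set m : Ω → ℝ := fun a => if b a = i then p' a else p a with hm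
    have hmω : m ω = p ω := by simp [hm, heq]
    have step1 : indirect b s v i (Function.update m ω (m ω + t)) + indirect b s v i p
        ≤ indirect b s v i (Function.update p ω (p ω + t)) + indirect b s v i m := by
      apply indirect_step_aux hv0 hvtop hinv ht
      rintro τ ⟨h1, h2⟩
      obtain ⟨Ψ, hΨ⟩ := exists_mem_demand (b := b) (s := s) hv0 hvtop i
        (Function.update m ω (m ω + τ))
      obtain ⟨Ψ', hΨ', ha, hb'⟩ := hfs.1 (Function.update m ω (m ω + τ))
        (Function.update p ω (p ω + τ))
        (by
          intro a ha
          by_cases h : a = ω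
          · subst h; simp [hmω]
          · have : b a ≠ i := fun hb => hbs a (hb.trans ha.symm)
            simp [h, hm, this])
        (by
          intro a ha
          by_cases h : a = ω
          · subst h; simp [hmω]
          · simpa [h, hm, ha] using hle a) Ψ hΨ
      have k1 := h1 Ψ' hΨ'
      have k2 := h2 Ψ hΨ
      by_cases hb : b ω = i
      · simp only [hb, iff_true] at k1 k2
        exact k2 (ha ω k1 hb (by simp [hmω]))
      · simp only [hb, iff_false, not_not] at k1 k2
        exact k1 (hb' ω k2 (hinv.resolve_left hb))
    have step2 : indirect b s v i (Function.update p' ω (p' ω + t)) + indirect b s v i m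
        ≤ indirect b s v i (Function.update m ω (m ω + t)) + indirect b s v i p' := by
      apply indirect_step_aux hv0 hvtop hinv ht
      rintro τ ⟨h1, h2⟩
      obtain ⟨Ψ, hΨ⟩ := exists_mem_demand (b := b) (s := s) hv0 hvtop i
        (Function.update m ω (m ω + τ))
      obtain ⟨Ψ', hΨ', ha, hb'⟩ := hfs.2 (Function.update m ω (m ω + τ))
        (Function.update p' ω (p' ω + τ))
        (by
          intro a ha
          by_cases h : a = ω
          · subst h; simp [hmω, heq]
          · simp [h, hm, ha])
        (by
          intro a ha
          by_cases h : a = ω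
          · subst h; simp [hmω, heq]
          · have : b a ≠ i := fun hb => hbs a (hb.trans ha.symm)
            simpa [h, hm, this] using hle a) Ψ hΨ
      have k1 := h1 Ψ hΨ
      have k2 := h2 Ψ' hΨ'
      by_cases hb : b ω = i
      · simp only [hb, iff_true] at k1 k2
        exact k2 (hb' ω k1 hb)
      · simp only [hb, iff_false, not_not] at k1 k2
        exact k1 (ha ω k2 (hinv.resolve_left hb) (by simp [hmω, heq]))
    linarith
  · -- The price of a trade not involving `i` is irrelevant for `i`.
    have hchi : chi b s i ω = 0 := by
      push Not at hinv
      simp [chi, hinv.1, hinv.2]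
    have hc : ∀ q : Ω → ℝ, indirect b s v i (Function.update q ω (q ω + t))
        = indirect b s v i q := by
      intro q
      unfold indirect
      congr 1
      funext Ψ
      rw [realUtility_update, hchi]
      simp
    rw [hc, hc]
    linarith

/-! ### Profiles of bundles -/

variable (b s) in
/-- The prices faced by agent `i` when buyers pay `x.1` and sellers receive `x.2`. -/
def facedPrices (i : I) (x : (Ω → ℝ) × (Ω → ℝ)) : Ω → ℝ :=
  fun ω => if b ω = i then x.1 ω else x.2 ω

/-- The trades that the profile `Ψ` assigns to the agents `e ω`; with `e = b` these are the trades
bought, with `e = s` the trades sold. -/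
def assigned (e : Ω → I) (Ψ : I → Finset Ω) : Finset Ω :=
  Finset.univ.filter fun ω => ω ∈ Ψ (e ω)

/-- The agents' payments add up to what buyers pay minus what sellers receive. -/
lemma sum_payments (hbs : ∀ ω, b ω ≠ s ω) (Ψ : I → Finset Ω) (x : (Ω → ℝ) × (Ω → ℝ)) :
    ∑ i, ∑ ω ∈ Ψ i, chi b s i ω * facedPrices b i x ω
      = ∑ ω ∈ assigned b Ψ, x.1 ω - ∑ ω ∈ assigned s Ψ, x.2 ω := by
  have h1 : ∀ i, ∑ ω ∈ Ψ i, chi b s i ω * facedPrices b i x ω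
      = ∑ ω, if ω ∈ Ψ i then chi b s i ω * facedPrices b i x ω else 0 := by
    intro i; simp
  simp_rw [h1]
  rw [Finset.sum_comm, assigned, assigned, Finset.sum_filter, Finset.sum_filter,
    ← Finset.sum_sub_distrib]
  refine Finset.sum_congr rfl fun ω _ => ?_
  rw [Finset.sum_eq_add (b ω) (s ω) (hbs ω)]
  · simp only [chi, facedPrices, if_true, hbs ω, if_false]
    split_ifs <;> ring
  · intro i _ hi
    simp [chi, hi.1.symm, hi.2.symm]
  · simp
  · simp

/-- At common prices the payments for a set of trades cancel. -/
lemma sum_payments_trades (hbs : ∀ ω, b ω ≠ s ω) (Φ : Finset Ω) (p : Ω → ℝ) :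
    ∑ i, ∑ ω ∈ Φ ∩ tradesOf b s i, chi b s i ω * p ω = 0 := by
  have h := sum_payments hbs (fun i => Φ ∩ tradesOf b s i) (p, p)
  have e1 : assigned b (fun i => Φ ∩ tradesOf b s i) = Φ := by
    ext ω; simp [assigned, tradesOf]
  have e2 : assigned s (fun i => Φ ∩ tradesOf b s i) = Φ := by
    ext ω; simp [assigned, tradesOf]
  rw [e1, e2] at h
  simpa [facedPrices] using h

variable (b s v) in
/-- The profiles of feasible bundles. -/
noncomputable def profiles : Finset (I → Finset Ω) := Fintype.piFinset (feasible b s v)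

lemma netValue_profile (hbs : ∀ ω, b ω ≠ s ω) (Ψ : I → Finset Ω) (x : (Ω → ℝ) × (Ω → ℝ)) :
    netValue (fun Ψ : I → Finset Ω => ∑ i, (v i (Ψ i)).toReal) (assigned b) (assigned s) Ψ x
      = ∑ i, realUtility b s v i (facedPrices b i x) (Ψ i) := by
  simp only [realUtility, Finset.sum_sub_distrib, netValue, sum_payments hbs]
  ring

/-- Without any clearing, the agents maximise independently. -/
lemma clearedMax_profiles (hbs : ∀ ω, b ω ≠ s ω) (hv0 : ∀ i, v i ∅ = 0)
    (x : (Ω → ℝ) × (Ω → ℝ)) :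
    clearedMax (profiles b s v) (fun Ψ : I → Finset Ω => ∑ i, (v i (Ψ i)).toReal)
        (assigned b) (assigned s) ∅ x
      = ∑ i, indirect b s v i (facedPrices b i x) := by
  have hcl : ∀ Ψ, Ψ ∈ clearedOn (profiles b s v) (assigned b) (assigned s) ∅
      ↔ ∀ i, Ψ i ∈ feasible b s v i := by
    intro Ψ; simp [clearedOn, profiles]
  apply le_antisymm
  · refine maxOver_le ⟨fun _ => ∅, (hcl _).2 fun i => empty_mem_feasible hv0 i⟩ fun Ψ hΨ => ?_
    rw [netValue_profile hbs]
    exact Finset.sum_le_sum fun i _ => le_maxOver _ ((hcl Ψ).1 hΨ i)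
  · choose Ψ hΨ e using fun i => exists_eq_maxOver (realUtility b s v i (facedPrices b i x))
      ⟨∅, empty_mem_feasible hv0 i⟩
    have := le_maxOver (fun Ψ => netValue (fun Ψ : I → Finset Ω => ∑ i, (v i (Ψ i)).toReal)
      (assigned b) (assigned s) Ψ x) ((hcl Ψ).2 hΨ)
    simp only [netValue_profile hbs] at this
    calc ∑ i, indirect b s v i (facedPrices b i x)
        = ∑ i, realUtility b s v i (facedPrices b i x) (Ψ i) :=
          Finset.sum_congr rfl fun i _ => e i
      _ ≤ _ := by
          simpa only [clearedMax, netValue_profile hbs] using this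

lemma sum_indirect_submodular (hbs : ∀ ω, b ω ≠ s ω) (hv0 : ∀ i, v i ∅ = 0)
    (hvtop : ∀ i Ψ, v i Ψ ≠ ⊤) (hfs : ∀ i, FullySubstitutable b s v i) :
    SubmodularOn (fun _ => True) (clearedMax (profiles b s v)
      (fun Ψ : I → Finset Ω => ∑ i, (v i (Ψ i)).toReal) (assigned b) (assigned s) ∅) := by
  intro x y _ _
  simp only [clearedMax_profiles hbs hv0, ← Finset.sum_add_distrib]
  refine Finset.sum_le_sum fun i _ => ?_
  have h := indirect_submodular hbs hv0 hvtop (hfs i) (facedPrices b i x) (facedPrices b i y)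
    trivial trivial
  have e1 : facedPrices b i (x ⊓ y) = facedPrices b i x ⊓ facedPrices b i y := by
    funext a; by_cases ha : b a = i <;> simp [facedPrices, ha]
  have e2 : facedPrices b i (x ⊔ y) = facedPrices b i x ⊔ facedPrices b i y := by
    funext a; by_cases ha : b a = i <;> simp [facedPrices, ha]
  rw [e1, e2]
  exact h

lemma sum_le_coalitionValue (Φ : Finset Ω) :
    ∑ i, v i (Φ ∩ tradesOf b s i) ≤ coalitionValue b s v Finset.univ :=
  Finset.le_sup' (fun Φ => ∑ i, v i (Φ ∩ tradesOf b s i))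
    (Finset.mem_powerset.2 fun ω _ => by simp [coalitionTrades])

/-- Clearing prices: the indirect utilities add up to at most the total value of some set of
trades that is feasible for everybody. -/
lemma exists_prices (hbs : ∀ ω, b ω ≠ s ω) (hv0 : ∀ i, v i ∅ = 0)
    (hvtop : ∀ i Ψ, v i Ψ ≠ ⊤) (hfs : ∀ i, FullySubstitutable b s v i) :
    ∃ (p : Ω → ℝ) (Φ : Finset Ω), (∀ i, v i (Φ ∩ tradesOf b s i) ≠ ⊥) ∧
      ∑ i, indirect b s v i p ≤ ∑ i, (v i (Φ ∩ tradesOf b s i)).toReal := by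
  have hz₀ : (fun _ => ∅) ∈ profiles b s v := by
    simp [profiles, empty_mem_feasible hv0]
  have h₀ : assigned b (fun _ : I => (∅ : Finset Ω)) = assigned s (fun _ => ∅) := by
    simp [assigned]
  obtain ⟨y, hy, hle⟩ := (clearing_induction hz₀ h₀
    (sum_indirect_submodular hbs hv0 hvtop hfs) Finset.univ).2 (0, 0) (fun _ _ => rfl)
  obtain ⟨Ψ, hΨ, e⟩ := exists_eq_maxOver (fun Ψ => netValue
    (fun Ψ : I → Finset Ω => ∑ i, (v i (Ψ i)).toReal) (assigned b) (assigned s) Ψ (0, 0))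
    (clearedOn_nonempty hz₀ h₀ Finset.univ)
  have hclr := Finset.mem_filter.1 hΨ
  have hf : ∀ i, Ψ i ∈ feasible b s v i := Fintype.mem_piFinset.1 hclr.1
  -- A profile that is cleared everywhere comes from a set of trades.
  have hΦ : ∀ i, assigned b Ψ ∩ tradesOf b s i = Ψ i := by
    intro i
    ext ω
    have hcl := hclr.2 ω (Finset.mem_univ ω)
    simp only [assigned, Finset.mem_filter, Finset.mem_univ, true_and] at hcl
    simp only [assigned, tradesOf, Finset.mem_inter, Finset.mem_filter, Finset.mem_univ, true_and]
    constructor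
    · rintro ⟨h, rfl | rfl⟩
      · exact h
      · exact hcl.1 h
    · intro h
      have hi := (mem_feasible.1 (hf i)).1 h
      simp only [tradesOf, Finset.mem_filter, Finset.mem_univ, true_and] at hi
      refine ⟨?_, hi⟩
      rcases hi with rfl | rfl
      · exact h
      · exact hcl.2 h
  refine ⟨y.1, assigned b Ψ, fun i => ?_, ?_⟩
  · rw [hΦ]; exact (mem_feasible.1 (hf i)).2
  · have hfp : ∀ i, facedPrices b i y = y.1 := by
      intro i; funext a
      have := hy a rfl
      by_cases ha : b a = i <;> simp [facedPrices, ha, this]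
    rw [clearedMax_profiles hbs hv0, clearedMax, e] at hle
    simp only [hfp] at hle
    simp only [hΦ]
    refine hle.trans (le_of_eq ?_)
    simp [netValue]

end Market

lemma EReal.coe_sum_toReal {ι : Type*} (S : Finset ι) (f : ι → EReal)
    (h1 : ∀ i ∈ S, f i ≠ ⊤) (h2 : ∀ i ∈ S, f i ≠ ⊥) :
    ((∑ i ∈ S, (f i).toReal : ℝ) : EReal) = ∑ i ∈ S, f i := by
  classical
  induction S using Finset.induction_on with
  | empty => simp
  | insert a S ha ih =>
    rw [Finset.sum_insert ha, Finset.sum_insert ha, EReal.coe_add,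
      ih (fun i hi => h1 i (by simp [hi])) (fun i hi => h2 i (by simp [hi])),
      EReal.coe_toReal (h1 a (by simp)) (h2 a (by simp))]

lemma EReal.sum_eq_bot {ι : Type*} (S : Finset ι) (f : ι → EReal) {a : ι} (ha : a ∈ S)
    (h : f a = ⊥) : ∑ i ∈ S, f i = ⊥ := by
  classical
  rw [← Finset.add_sum_erase S f ha, h, EReal.bot_add]

/-! ### The welfare theorems -/

/-- The first welfare theorem: competitive equilibrium allocations are
efficient; and the second welfare theorem: under full substitutability every efficient set
of trades can be supported by competitive equilibrium prices. -/
theorem welfare_theorems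
    (b s : Ω → I) (v : I → Finset Ω → EReal)
    (hbs : ∀ ω, b ω ≠ s ω) (hv0 : ∀ i, v i ∅ = 0) (hvtop : ∀ i Ψ, v i Ψ ≠ ⊤) :
    (∀ (p : Ω → ℝ) (Φ : Finset Ω),
        IsCompetitiveEquilibrium b s v p Φ → IsEfficient b s v Φ) ∧
    ((∀ i, FullySubstitutable b s v i) →
      ∀ Φ : Finset Ω, IsEfficient b s v Φ →
        ∃ p : Ω → ℝ, IsCompetitiveEquilibrium b s v p Φ) := by
  constructor
  · intro p Φ hCE
    have hd := fun i => (mem_demand_iff hv0 hvtop).1 (hCE i)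
    have hfin : ∀ i, v i (Φ ∩ tradesOf b s i) ≠ ⊥ := fun i => (mem_feasible.1 (hd i).1).2
    refine le_antisymm (sum_le_coalitionValue Φ) (Finset.sup'_le _ _ fun Φ' _ => ?_)
    by_cases hex : ∃ i, v i (Φ' ∩ tradesOf b s i) = ⊥
    · obtain ⟨i, hi⟩ := hex
      rw [EReal.sum_eq_bot Finset.univ (fun i => v i (Φ' ∩ tradesOf b s i))
        (Finset.mem_univ i) hi]
      exact bot_le
    · push Not at hex
      rw [← EReal.coe_sum_toReal _ _ (fun i _ => hvtop i _) (fun i _ => hex i),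
        ← EReal.coe_sum_toReal _ _ (fun i _ => hvtop i _) (fun i _ => hfin i), EReal.coe_le_coe_iff]
      have h := Finset.sum_le_sum fun i (_ : i ∈ Finset.univ) =>
        (hd i).2 (Φ' ∩ tradesOf b s i) (mem_feasible.2 ⟨Finset.inter_subset_right, hex i⟩)
      simp only [realUtility, Finset.sum_sub_distrib, sum_payments_trades hbs] at h
      linarith
  · intro hfs Φ hΦ
    obtain ⟨p, Φ', hfin', hle⟩ := exists_prices hbs hv0 hvtop hfs
    have hw : ∑ i, v i (Φ' ∩ tradesOf b s i) ≤ ∑ i, v i (Φ ∩ tradesOf b s i) := by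
      rw [show ∑ i, v i (Φ ∩ tradesOf b s i) = _ from hΦ]
      exact sum_le_coalitionValue Φ'
    rw [← EReal.coe_sum_toReal _ _ (fun i _ => hvtop i _) (fun i _ => hfin' i)] at hw
    have hfin : ∀ i, v i (Φ ∩ tradesOf b s i) ≠ ⊥ := by
      intro i hi
      rw [EReal.sum_eq_bot Finset.univ (fun i => v i (Φ ∩ tradesOf b s i))
        (Finset.mem_univ i) hi] at hw
      exact absurd (le_bot_iff.1 hw) (EReal.coe_ne_bot _)
    rw [← EReal.coe_sum_toReal _ _ (fun i _ => hvtop i _) (fun i _ => hfin i),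
      EReal.coe_le_coe_iff] at hw
    have hf : ∀ i, Φ ∩ tradesOf b s i ∈ feasible b s v i := fun i =>
      mem_feasible.2 ⟨Finset.inter_subset_right, hfin i⟩
    have hui : ∀ i ∈ Finset.univ, realUtility b s v i p (Φ ∩ tradesOf b s i)
        ≤ indirect b s v i p := fun i _ => le_maxOver _ (hf i)
    have hsum : ∑ i, realUtility b s v i p (Φ ∩ tradesOf b s i) = ∑ i, indirect b s v i p := by
      refine le_antisymm (Finset.sum_le_sum hui) ?_
      simp only [realUtility, Finset.sum_sub_distrib, sum_payments_trades hbs]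
      linarith
    have heq := (Finset.sum_eq_sum_iff_of_le hui).1 hsum
    refine ⟨p, fun i => (mem_demand_iff hv0 hvtop).2 ⟨hf i, fun Ψ hΨ => ?_⟩⟩
    rw [heq i (Finset.mem_univ i)]
    exact le_maxOver _ hΨ
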